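/- Let p be an odd prime, G a finite powerful p-group, and i ≥ 1. Then [Ω_i(G^{p²}), Ω_i(G^p)] ≤ (Ω_i(G^p))^{p²}. -/

import Mathlib

/-!
Write `P_0 = G` and `P_{k+1} = (P_k)^p`. For odd `p` and `G` powerful, `[P_j, P_k] ≤ P_{j+k+1}`
(`powSeries_comm`), and every element of `P_{j+k}` is the `p ^ k`-th power of an element of `P_j`
(`exists_pow_eq_of_mem_powSeries`).

Let `a ∈ G^{p²}` and `b ∈ G^p` have orders dividing `p ^ i`. As the right-hand side is normal, it is
enough to see that `[a, b]` lies in it. Now `[a, b] ∈ P_3`, so `[a, b] = g ^ p²` with `g ∈ G^p`, and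
all that is needed is `g ^ p ^ i = 1`, that is, `[a, b] ^ p ^ (i - 2) = 1` (and `[a, b] = 1` if
`i = 1`). Writing `a = c ^ p²` and `b = d ^ p`, this is a case of the following order estimate
(`commutator_pow_pow`), due to Fernández-Alcober: if `x ^ p ^ (s + 1) = 1` and `y ^ p ^ s = 1` with
`s = m + j + k`, then `[x ^ p ^ j, y ^ p ^ k] ^ p ^ m = 1`.

The estimate is proved together with Wilson's theorem that the elements of order dividing `p ^ m`
form a subgroup (`omegaClosed_of_powerful`), by induction on the order of `G`:

* If `y ^ p ^ m = 1`, then `[x, y]` is a product of two elements of order dividing `p ^ m` in the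
  powerful subgroup `⟨y⟩ G^p`. This subgroup is proper unless `G` is cyclic, so
  `[x, y] ^ p ^ m = 1` (`commutator_pow_eq_one`).
* The estimate follows by descending induction on `s` and ascending induction on `j` and `k`.
  With `u = [b, c]`, the commutator `[b, c ^ p]` equals `u ^ p` up to powers of `[c, u] ^ p` and
  commutators `[c, u, c]`, `[c, u, u]`; the latter are covered by the estimate for larger `s`, and
  everything happens in `Ω_m(G^p)`, which has exponent dividing `p ^ m` by induction
  (`commutator_step`).
* Wilson's theorem for `G` follows by expanding `(x * y) ^ p` modulo `Ω_m(G^p)`.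

The only commutator identity used is the power formula in class two (`mul_pow_class_two`),
applied in suitable quotients.
-/

/-- The subgroup generated by the `n`-th powers of the elements of `H`. -/
def subgroupPow {G : Type*} [Group G] (H : Subgroup G) (n : ℕ) : Subgroup G :=
  Subgroup.closure {x | ∃ h ∈ H, h ^ n = x}

/-- `Ω_i(H)`: the subgroup generated by the elements of `H` whose order divides `p ^ i`. -/
def omegaSubgroup {G : Type*} [Group G] (p i : ℕ) (H : Subgroup G) : Subgroup G :=
  Subgroup.closure {x | x ∈ H ∧ x ^ p ^ i = 1}

/-- A finite `p`-group `G` is powerful if `[G,G] ≤ G^p` when `p` is odd,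
and `[G,G] ≤ G^4` when `p = 2`. -/
def IsPowerful (p : ℕ) (G : Type*) [Group G] : Prop :=
  if p = 2 then commutator G ≤ subgroupPow (⊤ : Subgroup G) 4
  else commutator G ≤ subgroupPow (⊤ : Subgroup G) p

/-- The subgroup of `n`-th powers of the whole group is normal (indeed characteristic). -/
instance subgroupPow_top_normal {G : Type*} [Group G] (n : ℕ) :
    (subgroupPow (⊤ : Subgroup G) n).Normal := by
  constructor
  intro x hx g
  have key : Subgroup.map (MulAut.conj g).toMonoidHom (subgroupPow (⊤ : Subgroup G) n)
      ≤ subgroupPow (⊤ : Subgroup G) n := by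
    rw [subgroupPow, MonoidHom.map_closure]
    apply Subgroup.closure_le _ |>.mpr
    rintro y ⟨z, ⟨h, -, rfl⟩, rfl⟩
    exact Subgroup.subset_closure ⟨(MulAut.conj g) h, trivial, by
      simp [((MulAut.conj g).toMonoidHom.map_pow h n).symm]⟩
  have hmem : (MulAut.conj g) x ∈
      Subgroup.map (MulAut.conj g).toMonoidHom (subgroupPow (⊤ : Subgroup G) n) :=
    Subgroup.mem_map_of_mem _ hx
  simpa [MulAut.conj_apply] using key hmem

/-- A powerfully central chain `{1} = H 0 ≤ H 1 ≤ ⋯ ≤ H n = G` of length `n`: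
`[H (k+1), G] ≤ (H k)^p` for all `k < n`. -/
def IsPowerfullyCentralChain (p : ℕ) {G : Type*} [Group G] (n : ℕ) (H : ℕ → Subgroup G) : Prop :=
  H 0 = ⊥ ∧ H n = ⊤ ∧ (∀ k, k < n → H k ≤ H (k + 1)) ∧
    ∀ k, k < n → ⁅H (k + 1), (⊤ : Subgroup G)⁆ ≤ subgroupPow (H k) p

/-- A group is powerfully nilpotent if it is powerful and admits a powerfully central chain. -/
def IsPowerfullyNilpotent (p : ℕ) (G : Type*) [Group G] : Prop :=
  IsPowerful p G ∧ ∃ (n : ℕ) (H : ℕ → Subgroup G), IsPowerfullyCentralChain p n H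

/-- The powerful nilpotency class: the least possible length of a powerfully central chain. -/
noncomputable def powerfulNilpotencyClass (p : ℕ) (G : Type*) [Group G] : ℕ :=
  sInf {n | ∃ H : ℕ → Subgroup G, IsPowerfullyCentralChain p n H}

open scoped commutatorElement

universe u

/-! ### Generated subgroups and commutators -/

theorem comm_mem_iff {G : Type*} [Group G] (N : Subgroup G) [N.Normal] (a b : G) :
    ⁅a, b⁆ ∈ N ↔ Commute (a : G ⧸ N) (b : G ⧸ N) := by
  rw [← QuotientGroup.eq_one_iff, ← commutatorElement_eq_one_iff_commute]
  exact Iff.rfl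

theorem closure_normal_of_conj {G : Type*} [Group G] {S : Set G}
    (h : ∀ s ∈ S, ∀ g : G, g * s * g⁻¹ ∈ S) : (Subgroup.closure S).Normal := by
  constructor
  intro x hx g
  induction hx using Subgroup.closure_induction with
  | mem s hs => exact Subgroup.subset_closure (h s hs g)
  | one => simp
  | mul a b _ _ ha hb =>
    have := mul_mem ha hb
    simpa [mul_assoc] using this
  | inv a _ ha =>
    have := inv_mem ha
    simpa [mul_assoc] using this

theorem commutator_closure_le {G : Type*} [Group G] {A B : Set G} {N : Subgroup G} [N.Normal]
    (h : ∀ a ∈ A, ∀ b ∈ B, ⁅a, b⁆ ∈ N) :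
    ⁅Subgroup.closure A, Subgroup.closure B⁆ ≤ N := by
  rw [Subgroup.commutator_le]
  intro a ha b hb
  rw [comm_mem_iff]
  induction ha using Subgroup.closure_induction with
  | mem a ha =>
    induction hb using Subgroup.closure_induction with
    | mem b hb => exact (comm_mem_iff N a b).1 (h a ha b hb)
    | one => exact Commute.one_right _
    | mul x y _ _ hx hy => exact hx.mul_right hy
    | inv x _ hx => exact hx.inv_right
  | one => exact Commute.one_left _
  | mul x y _ _ hx hy => exact hx.mul_left hy
  | inv x _ hx => exact hx.inv_left

theorem subgroupPow_normal {G : Type*} [Group G] (N : Subgroup G) [hN : N.Normal] (n : ℕ) :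
    (subgroupPow N n).Normal := by
  refine closure_normal_of_conj ?_
  rintro s ⟨h, hh, rfl⟩ g
  exact ⟨g * h * g⁻¹, hN.conj_mem h hh g, conj_pow⟩

theorem omegaSubgroup_normal {G : Type*} [Group G] (p i : ℕ) (N : Subgroup G) [hN : N.Normal] :
    (omegaSubgroup p i N).Normal := by
  refine closure_normal_of_conj ?_
  rintro s ⟨hs, h1⟩ g
  exact ⟨hN.conj_mem s hs g, by rw [conj_pow, h1]; simp⟩

theorem pow_mem_subgroupPow {G : Type*} [Group G] {N : Subgroup G} {x : G} (hx : x ∈ N) (n : ℕ) :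
    x ^ n ∈ subgroupPow N n := Subgroup.subset_closure ⟨x, hx, rfl⟩

theorem subgroupPow_mono {G : Type*} [Group G] {N M : Subgroup G} (h : N ≤ M) (n : ℕ) :
    subgroupPow N n ≤ subgroupPow M n :=
  Subgroup.closure_mono (by rintro _ ⟨x, hx, rfl⟩; exact ⟨x, h hx, rfl⟩)

theorem subgroupPow_le {G : Type*} [Group G] (N : Subgroup G) (n : ℕ) : subgroupPow N n ≤ N :=
  (Subgroup.closure_le _).2 (by rintro _ ⟨x, hx, rfl⟩; exact pow_mem hx n)

theorem map_subtype_subgroupPow {G : Type*} [Group G] (H : Subgroup G) (n : ℕ) :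
    (subgroupPow (⊤ : Subgroup H) n).map H.subtype = subgroupPow H n := by
  rw [subgroupPow, MonoidHom.map_closure, subgroupPow]
  congr 1
  ext x
  constructor
  · rintro ⟨_, ⟨h, -, rfl⟩, rfl⟩
    exact ⟨h, h.2, by simp⟩
  · rintro ⟨h, hh, rfl⟩
    exact ⟨⟨h, hh⟩ ^ n, ⟨_, trivial, rfl⟩, by simp⟩

theorem coe_mem_subgroupPow {G : Type*} [Group G] (H : Subgroup G) (n : ℕ) (x : H) :
    x ∈ subgroupPow (⊤ : Subgroup H) n ↔ (x : G) ∈ subgroupPow H n := by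
  rw [← map_subtype_subgroupPow H n, Subgroup.mem_map]
  constructor
  · intro h; exact ⟨x, h, rfl⟩
  · rintro ⟨y, hy, h⟩
    rwa [← Subtype.ext (a1 := y) (a2 := x) h]

theorem powerful_subgroup {G : Type*} [Group G] {p : ℕ} {H : Subgroup G}
    (h : ∀ x ∈ H, ∀ y ∈ H, ⁅x, y⁆ ∈ subgroupPow H p) :
    commutator H ≤ subgroupPow (⊤ : Subgroup H) p := by
  rw [commutator_def, Subgroup.commutator_le]
  intro x _ y _
  rw [coe_mem_subgroupPow]
  exact h x x.2 y y.2

/-! ### Power formulas modulo a normal subgroup -/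

/-- The power formula in class two. -/
theorem mul_pow_class_two {G : Type*} [Group G] (u x : G)
    (hx : Commute ⁅x, u⁆ x) (hu : Commute ⁅x, u⁆ u) (n : ℕ) :
    (u * x) ^ n = ⁅x, u⁆ ^ (n.choose 2) * (u ^ n * x ^ n) := by
  set w := ⁅x, u⁆ with hw
  have hxu : x * u = w * (u * x) := by rw [hw, commutatorElement_def]; group
  have hpow : ∀ n : ℕ, x ^ n * u = w ^ n * (u * x ^ n) := by
    intro n
    induction n with
    | zero => simp
    | succ n ih =>
      calc x ^ (n + 1) * u = x ^ n * (x * u) := by rw [pow_succ, mul_assoc]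
        _ = w * (x ^ n * u) * x := by
          rw [hxu, ← mul_assoc, ← (hx.pow_right n).eq]; simp only [mul_assoc]
        _ = _ := by rw [ih, pow_succ' w, pow_succ x]; simp only [mul_assoc]
  induction n with
  | zero => simp
  | succ n ih =>
    calc (u * x) ^ (n + 1) = w ^ n.choose 2 * (u ^ n * (x ^ n * u) * x) := by
          rw [pow_succ, ih]; simp only [mul_assoc]
      _ = w ^ n.choose 2 * (w ^ n * (u ^ n * u * (x ^ n * x))) := by
          rw [hpow, ← mul_assoc (u ^ n), ← (hu.pow_pow n n).eq]; simp only [mul_assoc]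
      _ = _ := by
          rw [← mul_assoc, ← pow_add, ← pow_succ, ← pow_succ, Nat.choose_succ_succ' n 1,
            Nat.choose_one_right, add_comm (n.choose 2)]

/-- `(u x)^p ≡ u^p x^p` modulo `M` when `[x, u]` is central modulo `M` in `⟨x, u⟩` and has `p`-th
power in `M`; this needs `p` odd, so that `p` divides the binomial coefficient `p.choose 2`. -/
theorem mul_pow_mod {G : Type*} [Group G] {p : ℕ} (hp : p.Prime) (hp2 : p ≠ 2)
    (M : Subgroup G) [M.Normal] (u x : G)
    (h1 : ⁅⁅x, u⁆, x⁆ ∈ M) (h2 : ⁅⁅x, u⁆, u⁆ ∈ M) (h3 : ⁅x, u⁆ ^ p ∈ M) :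
    (((u * x) ^ p : G) : G ⧸ M) = ((u ^ p * x ^ p : G) : G ⧸ M) := by
  have h := mul_pow_class_two (u : G ⧸ M) (x : G ⧸ M) ((comm_mem_iff M _ _).1 h1)
    ((comm_mem_iff M _ _).1 h2) p
  obtain ⟨k, hk⟩ : p ∣ p.choose 2 :=
    hp.dvd_choose_self two_ne_zero (lt_of_le_of_ne hp.two_le (Ne.symm hp2))
  have h3' : ⁅(x : G ⧸ M), (u : G ⧸ M)⁆ ^ p = 1 := (QuotientGroup.eq_one_iff _).2 h3
  rw [hk, pow_mul, h3', one_pow, one_mul] at h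
  exact h

/-- A criterion for `[g, x ^ p] ∈ M`, from `mul_pow_mod` applied to `g x g⁻¹ = [g, x] x`. -/
theorem comm_pow_mem {G : Type*} [Group G] {p : ℕ} (hp : p.Prime) (hp2 : p ≠ 2)
    (M : Subgroup G) [M.Normal] (g x : G)
    (h1 : ⁅⁅x, ⁅g, x⁆⁆, x⁆ ∈ M) (h2 : ⁅⁅x, ⁅g, x⁆⁆, ⁅g, x⁆⁆ ∈ M)
    (h3 : ⁅x, ⁅g, x⁆⁆ ^ p ∈ M) (h4 : ⁅g, x⁆ ^ p ∈ M) : ⁅g, x ^ p⁆ ∈ M := by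
  have h := mul_pow_mod hp hp2 M ⁅g, x⁆ x h1 h2 h3
  have h5 : ⁅g, x⁆ * x = g * x * g⁻¹ := by rw [commutatorElement_def]; group
  rw [h5, conj_pow] at h
  have h6 : (((g * x ^ p * g⁻¹) * (x ^ p)⁻¹ : G) : G ⧸ M) = ((⁅g, x⁆ ^ p : G) : G ⧸ M) := by
    rw [QuotientGroup.mk_mul, h, ← QuotientGroup.mk_mul, mul_inv_cancel_right]
  rw [← QuotientGroup.eq_one_iff, commutatorElement_def, h6, QuotientGroup.eq_one_iff]
  exact h4

/-! ### Powerfully embedded subgroups -/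

/-- If `N` is powerfully embedded in `G`, so is `N^p`. Since `G` is nilpotent, it suffices to show
`K ≤ L [K, G]` for `K = [G, N^p]` and `L = (N^p)^p`. -/
theorem powerfully_embedded_pow {G : Type*} [Group G] [Finite G] {p : ℕ} (hp : p.Prime)
    (hp2 : p ≠ 2) (hG : IsPGroup p G) (N : Subgroup G) [N.Normal]
    (h : ⁅(⊤ : Subgroup G), N⁆ ≤ subgroupPow N p) :
    ⁅(⊤ : Subgroup G), subgroupPow N p⁆ ≤ subgroupPow (subgroupPow N p) p := by
  have := Fact.mk hp
  have := subgroupPow_normal N p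
  have := subgroupPow_normal (subgroupPow N p) p
  set A := subgroupPow N p with hA
  set L := subgroupPow A p with hL
  set K := ⁅(⊤ : Subgroup G), A⁆ with hK
  have key : K ≤ L ⊔ ⁅K, (⊤ : Subgroup G)⁆ := by
    have hgen : (⊤ : Subgroup G) = Subgroup.closure Set.univ := by simp
    rw [hK]
    conv_lhs => rw [hgen, hA, subgroupPow]
    refine commutator_closure_le ?_
    rintro g - _ ⟨x, hx, rfl⟩
    have hu : ⁅g, x⁆ ∈ A := h (Subgroup.commutator_mem_commutator trivial hx)
    have hw : ⁅x, ⁅g, x⁆⁆ ∈ K := Subgroup.commutator_mem_commutator trivial hu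
    have hwA : ⁅x, ⁅g, x⁆⁆ ∈ A := Subgroup.commutator_le_right _ _ hw
    have hKM : ⁅K, (⊤ : Subgroup G)⁆ ≤ L ⊔ ⁅K, (⊤ : Subgroup G)⁆ := le_sup_right
    have hLM : L ≤ L ⊔ ⁅K, (⊤ : Subgroup G)⁆ := le_sup_left
    exact comm_pow_mem hp hp2 _ g x
      (hKM (Subgroup.commutator_mem_commutator hw trivial))
      (hKM (Subgroup.commutator_mem_commutator hw trivial))
      (hLM (pow_mem_subgroupPow hwA p)) (hLM (pow_mem_subgroupPow hu p))
  have hn : ∀ n, K ≤ L ⊔ (⊤ : Subgroup G).lowerCentralSeries n := by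
    intro n
    induction n with
    | zero => simp
    | succ n ih =>
      refine key.trans (sup_le le_sup_left ?_)
      rw [Subgroup.commutator_le]
      intro k hk g _
      rw [Subgroup.lowerCentralSeries_succ]
      obtain ⟨l, hl, c, hc, rfl⟩ := Subgroup.mem_sup_of_normal_left.1 (ih hk)
      have : ((⊤ : Subgroup G).lowerCentralSeries n).Normal := inferInstance
      have h1 : ⁅l, g⁆ ∈ L := Subgroup.commutator_le_left L ⊤
        (Subgroup.commutator_mem_commutator hl trivial)
      have h2 : ⁅c, g⁆ ∈ ⁅(⊤ : Subgroup G).lowerCentralSeries n, (⊤ : Subgroup G)⁆ :=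
        Subgroup.commutator_mem_commutator hc trivial
      rw [comm_mem_iff]
      rw [QuotientGroup.mk_mul]
      exact ((comm_mem_iff _ _ _).1 (Subgroup.mem_sup_left h1)).mul_left
        ((comm_mem_iff _ _ _).1 (Subgroup.mem_sup_right h2))
  have : Group.IsNilpotent G := hG.isNilpotent
  obtain ⟨n, hbot⟩ := Subgroup.nilpotent_iff_lowerCentralSeries.1 this
  simpa [hbot] using hn n

/-- Elements of `G^p` are non-generators: a proper subgroup lies in a normal subgroup of index `p`,
which contains all `p`-th powers. -/
theorem eq_top_of_sup_pow {G : Type*} [Group G] [Finite G] {p : ℕ} (hp : p.Prime)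
    (hG : IsPGroup p G) (H : Subgroup G) (h : H ⊔ subgroupPow (⊤ : Subgroup G) p = ⊤) :
    H = ⊤ := by
  have := Fact.mk hp
  by_contra hne
  obtain ⟨n, hn⟩ := IsPGroup.iff_card.1 hG
  obtain ⟨m, hm⟩ := IsPGroup.iff_card.1 (hG.to_subgroup H)
  have hlt : m < n := by
    have h1 : Nat.card H < Nat.card G := by
      refine lt_of_le_of_ne (Subgroup.card_le_card_group H) ?_
      intro h; exact hne (Subgroup.eq_top_of_card_eq H h)
    rw [hn, hm] at h1
    exact (Nat.pow_lt_pow_iff_right hp.one_lt).1 h1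
  obtain ⟨k, rfl⟩ : ∃ k, n = k + 1 := ⟨n - 1, by omega⟩
  obtain ⟨K, hK, hHK⟩ := Sylow.exists_subgroup_card_pow_prime_le p
    (n := m) (m := k) (hn ▸ pow_dvd_pow p (Nat.le_succ k)) H hm (by omega)
  have hidx : K.index = p := by
    have := K.card_mul_index
    rw [hK, hn, pow_succ] at this
    exact Nat.eq_of_mul_eq_mul_left (pow_pos hp.pos k) this
  have hnorm : K.Normal := by
    refine Subgroup.normal_of_index_eq_minFac_card ?_
    rw [hidx, hn, hp.pow_minFac (by omega)]
  have hle : subgroupPow (⊤ : Subgroup G) p ≤ K := by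
    refine (Subgroup.closure_le _).2 ?_
    rintro _ ⟨x, -, rfl⟩
    have := K.pow_index_mem x
    rwa [hidx] at this
  have : K = ⊤ := top_le_iff.1 (h ▸ sup_le hHK hle)
  rw [this, Subgroup.index_top] at hidx
  exact hp.one_lt.ne hidx

/-! ### The iterated power series of a powerful group -/

/-- The series `P_0 = G`, `P_{k+1} = (P_k)^p`. In a powerful `p`-group `P_k` is the set of
`p ^ k`-th powers, see `exists_pow_eq_of_mem_powSeries`. -/
def powSeries (p : ℕ) (G : Type*) [Group G] : ℕ → Subgroup G
  | 0 => ⊤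
  | k + 1 => subgroupPow (powSeries p G k) p

instance powSeries_normal (p : ℕ) (G : Type*) [Group G] (k : ℕ) : (powSeries p G k).Normal := by
  induction k with
  | zero => exact inferInstanceAs (⊤ : Subgroup G).Normal
  | succ k ih => exact subgroupPow_normal (powSeries p G k) p

theorem powSeries_antitone (p : ℕ) (G : Type*) [Group G] : Antitone (powSeries p G) :=
  antitone_nat_of_succ_le fun k => subgroupPow_le (powSeries p G k) p

theorem pow_mem_powSeries {G : Type*} [Group G] {p : ℕ} {x : G} {j : ℕ} (hx : x ∈ powSeries p G j)
    (k : ℕ) : x ^ p ^ k ∈ powSeries p G (j + k) := by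
  induction k with
  | zero => simpa using hx
  | succ k ih =>
    rw [pow_succ, pow_mul]
    exact pow_mem_subgroupPow ih p

theorem powSeries_comm_top {G : Type*} [Group G] [Finite G] {p : ℕ} (hp : p.Prime)
    (hp2 : p ≠ 2) (hG : IsPGroup p G) (hpow : commutator G ≤ subgroupPow (⊤ : Subgroup G) p)
    (k : ℕ) : ⁅(⊤ : Subgroup G), powSeries p G k⁆ ≤ powSeries p G (k + 1) := by
  induction k with
  | zero => exact hpow
  | succ k ih => exact powerfully_embedded_pow hp hp2 hG (powSeries p G k) ih

/-- `[P_j, P_k] ≤ P_{j+k+1}`. If `u = [g, x]` lies in `P_{j+k+1}`, then modulo `P_{j+k+2}` it is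
central with trivial `p`-th power, so `[g, x ^ p]` vanishes there. -/
theorem powSeries_comm {G : Type*} [Group G] [Finite G] {p : ℕ} (hp : p.Prime)
    (hp2 : p ≠ 2) (hG : IsPGroup p G) (hpow : commutator G ≤ subgroupPow (⊤ : Subgroup G) p)
    (j k : ℕ) : ⁅powSeries p G j, powSeries p G k⁆ ≤ powSeries p G (j + k + 1) := by
  induction k with
  | zero =>
    rw [Subgroup.commutator_comm]
    exact powSeries_comm_top hp hp2 hG hpow j
  | succ k ih =>
    have hgen : powSeries p G j = Subgroup.closure (powSeries p G j) := by simp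
    rw [hgen]
    refine commutator_closure_le ?_
    rintro g hg _ ⟨x, hx, rfl⟩
    have hu : ⁅g, x⁆ ∈ powSeries p G (j + k + 1) :=
      ih (Subgroup.commutator_mem_commutator hg hx)
    have hw : ⁅x, ⁅g, x⁆⁆ ∈ powSeries p G (j + (k + 1) + 1) :=
      powSeries_comm_top hp hp2 hG hpow (j + k + 1)
        (Subgroup.commutator_mem_commutator trivial hu)
    have hw' : ∀ z, ⁅⁅x, ⁅g, x⁆⁆, z⁆ ∈ powSeries p G (j + (k + 1) + 1) := fun z =>
      Subgroup.commutator_le_left _ ⊤ (Subgroup.commutator_mem_commutator hw trivial)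
    exact comm_pow_mem hp hp2 _ g x (hw' _) (hw' _) (pow_mem hw p) (pow_mem_subgroupPow hu p)

theorem powerful_powSeries {G : Type*} [Group G] [Finite G] {p : ℕ} (hp : p.Prime)
    (hp2 : p ≠ 2) (hG : IsPGroup p G) (hpow : commutator G ≤ subgroupPow (⊤ : Subgroup G) p)
    (k : ℕ) : commutator (powSeries p G k) ≤ subgroupPow (⊤ : Subgroup (powSeries p G k)) p :=
  powerful_subgroup fun _ _ _ hy => powSeries_comm_top hp hp2 hG hpow k
    (Subgroup.commutator_mem_commutator trivial hy)

/-- The subgroup `⟨y⟩ G^p` is powerful: modulo `P_2` it is generated by `y` and central elements, so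
its derived subgroup lies in `P_2 = (G^p)^p`. -/
theorem powerful_zpowers_sup {G : Type*} [Group G] [Finite G] {p : ℕ} (hp : p.Prime)
    (hp2 : p ≠ 2) (hG : IsPGroup p G) (hpow : commutator G ≤ subgroupPow (⊤ : Subgroup G) p)
    (y : G) :
    commutator (Subgroup.zpowers y ⊔ powSeries p G 1 : Subgroup G) ≤
      subgroupPow (⊤ : Subgroup (Subgroup.zpowers y ⊔ powSeries p G 1 : Subgroup G)) p := by
  refine powerful_subgroup fun a ha b hb => ?_
  refine subgroupPow_mono (N := powSeries p G 1) le_sup_right p ?_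
  change ⁅a, b⁆ ∈ powSeries p G 2
  have hcentral : ∀ g : G, ∀ w ∈ powSeries p G 1,
      Commute (g : G ⧸ powSeries p G 2) (w : G ⧸ powSeries p G 2) := fun g w hw =>
    (comm_mem_iff _ _ _).1 (powSeries_comm_top hp hp2 hG hpow 1
      (Subgroup.commutator_mem_commutator trivial hw))
  obtain ⟨_, ⟨r, rfl⟩, v, hv, rfl⟩ := Subgroup.mem_sup_of_normal_right.1 ha
  obtain ⟨_, ⟨s, rfl⟩, w, hw, rfl⟩ := Subgroup.mem_sup_of_normal_right.1 hb
  rw [comm_mem_iff]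
  have h1 : Commute ((y ^ r : G) : G ⧸ powSeries p G 2) ((y ^ s * w : G) : G ⧸ powSeries p G 2) :=
    Commute.mul_right (Commute.zpow_zpow (Commute.refl (y : G ⧸ powSeries p G 2)) r s)
      (hcentral (y ^ r) w hw)
  exact Commute.mul_left h1 (hcentral (y ^ s * w) v hv).symm

/-- If `⟨y⟩ G^p = G`, then `G` is cyclic, hence abelian. -/
theorem commute_of_zpowers_sup_eq_top {G : Type*} [Group G] [Finite G] {p : ℕ} (hp : p.Prime)
    (hG : IsPGroup p G) (y : G) (h : Subgroup.zpowers y ⊔ powSeries p G 1 = ⊤) (a b : G) :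
    Commute a b := by
  have htop := eq_top_of_sup_pow hp hG _ h
  obtain ⟨r, rfl⟩ := Subgroup.mem_zpowers_iff.1 (htop ▸ Subgroup.mem_top a)
  obtain ⟨s, rfl⟩ := Subgroup.mem_zpowers_iff.1 (htop ▸ Subgroup.mem_top b)
  exact Commute.zpow_zpow (Commute.refl y) r s

theorem card_lt_of_ne_top {G : Type*} [Group G] [Finite G] {H : Subgroup G} (h : H ≠ ⊤) :
    Nat.card H < Nat.card G :=
  lt_of_le_of_ne (Subgroup.card_le_card_group H) fun he => h (Subgroup.eq_top_of_card_eq H he)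

/-- In a powerful `p`-group every element `g` of `G^p` is a `p`-th power. Modulo `P_2` one has
`g = x ^ p`, so `g` lies in `H^p` for the powerful subgroup `H = ⟨x⟩ G^p`; either `H` is proper and
induction on the order applies, or `G` is cyclic. -/
theorem exists_pow_eq {p : ℕ} (hp : p.Prime) (hp2 : p ≠ 2) (n : ℕ) :
    ∀ (G : Type u) [Group G] [Finite G], Nat.card G = n → IsPGroup p G →
      commutator G ≤ subgroupPow (⊤ : Subgroup G) p →
      ∀ g ∈ subgroupPow (⊤ : Subgroup G) p, ∃ x : G, x ^ p = g := by
  induction n using Nat.strong_induction_on with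
  | _ n ih =>
  intro G _ _ hn hG hpow g hg
  -- modulo the second term of the series, `x ↦ x ^ p` is a homomorphism
  have hmul : ∀ a b : G, (((a * b) ^ p : G) : G ⧸ powSeries p G 2) =
      ((a ^ p * b ^ p : G) : G ⧸ powSeries p G 2) := by
    intro a b
    have hw : ⁅b, a⁆ ∈ powSeries p G 1 :=
      powSeries_comm_top hp hp2 hG hpow 0 (Subgroup.commutator_mem_commutator trivial trivial)
    have hw' : ∀ z, ⁅⁅b, a⁆, z⁆ ∈ powSeries p G 2 := fun z =>
      powSeries_comm hp hp2 hG hpow 1 0 (Subgroup.commutator_mem_commutator hw trivial)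
    exact mul_pow_mod hp hp2 _ a b (hw' _) (hw' _) (pow_mem_subgroupPow hw p)
  have hex : ∃ x : G, ((x ^ p : G) : G ⧸ powSeries p G 2) = (g : G ⧸ powSeries p G 2) := by
    rw [subgroupPow] at hg
    induction hg using Subgroup.closure_induction with
    | mem s hs => obtain ⟨x, -, rfl⟩ := hs; exact ⟨x, rfl⟩
    | one => exact ⟨1, by simp⟩
    | mul a b _ _ ha hb =>
      obtain ⟨x, hx⟩ := ha
      obtain ⟨y, hy⟩ := hb
      exact ⟨x * y, by rw [hmul, QuotientGroup.mk_mul, hx, hy, QuotientGroup.mk_mul]⟩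
    | inv a _ ha =>
      obtain ⟨x, hx⟩ := ha
      exact ⟨x⁻¹, by rw [inv_pow, QuotientGroup.mk_inv, hx, QuotientGroup.mk_inv]⟩
  obtain ⟨x, hx⟩ := hex
  rw [QuotientGroup.eq] at hx
  by_cases htop : Subgroup.zpowers x ⊔ powSeries p G 1 = ⊤
  · -- here `G` is cyclic
    have hcomm := commute_of_zpowers_sup_eq_top hp hG x htop
    clear hx
    rw [subgroupPow] at hg
    induction hg using Subgroup.closure_induction with
    | mem s hs => obtain ⟨x, -, rfl⟩ := hs; exact ⟨x, rfl⟩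
    | one => exact ⟨1, by simp⟩
    | mul a b _ _ ha hb =>
      obtain ⟨y, rfl⟩ := ha
      obtain ⟨z, rfl⟩ := hb
      exact ⟨y * z, (hcomm y z).mul_pow p⟩
    | inv a _ ha =>
      obtain ⟨y, rfl⟩ := ha
      exact ⟨y⁻¹, by rw [inv_pow]⟩
  · set H : Subgroup G := Subgroup.zpowers x ⊔ powSeries p G 1 with hH
    have hgH : g ∈ subgroupPow H p := by
      have h1 : x ^ p ∈ subgroupPow H p :=
        pow_mem_subgroupPow (Subgroup.mem_sup_left (Subgroup.mem_zpowers x)) p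
      have h2 : (x ^ p)⁻¹ * g ∈ subgroupPow H p :=
        subgroupPow_mono (N := powSeries p G 1) le_sup_right p hx
      simpa using mul_mem h1 h2
    have hgH' : g ∈ H := subgroupPow_le H p hgH
    obtain ⟨z, hz⟩ := ih (Nat.card H) (hn ▸ card_lt_of_ne_top htop) H rfl (hG.to_subgroup H)
      (powerful_zpowers_sup hp hp2 hG hpow x) ⟨g, hgH'⟩ ((coe_mem_subgroupPow H p _).2 hgH)
    exact ⟨z, by simpa using congrArg Subtype.val hz⟩

/-- Every element of `P_{j+k}` is the `p ^ k`-th power of an element of `P_j`. -/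
theorem exists_pow_eq_of_mem_powSeries {G : Type u} [Group G] [Finite G] {p : ℕ} (hp : p.Prime)
    (hp2 : p ≠ 2) (hG : IsPGroup p G) (hpow : commutator G ≤ subgroupPow (⊤ : Subgroup G) p)
    (j k : ℕ) : ∀ g ∈ powSeries p G (j + k), ∃ x ∈ powSeries p G j, x ^ p ^ k = g := by
  induction k with
  | zero => intro g hg; exact ⟨g, hg, by simp⟩
  | succ k ih =>
    intro g hg
    have hg' : g ∈ powSeries p G (j + k) := powSeries_antitone p G (Nat.le_succ _) hg
    obtain ⟨z, hz⟩ := exists_pow_eq hp hp2 _ (powSeries p G (j + k)) rfl (hG.to_subgroup _)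
      (powerful_powSeries hp hp2 hG hpow (j + k)) ⟨g, hg'⟩ ((coe_mem_subgroupPow _ p _).2 hg)
    obtain ⟨x, hx, hxz⟩ := ih z z.2
    refine ⟨x, hx, ?_⟩
    rw [pow_succ, pow_mul, hxz]
    simpa using congrArg Subtype.val hz

/-! ### Orders of products and commutators -/

/-- For every `m`, the elements of order dividing `p ^ m` are closed under multiplication. -/
def OmegaClosed (p : ℕ) (G : Type*) [Group G] : Prop :=
  ∀ (m : ℕ) (x y : G), x ^ p ^ m = 1 → y ^ p ^ m = 1 → (x * y) ^ p ^ m = 1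

theorem pow_eq_one_of_le {G : Type*} [Group G] {p a b : ℕ} {x : G} (hx : x ^ p ^ a = 1)
    (h : a ≤ b) : x ^ p ^ b = 1 := by
  obtain ⟨c, rfl⟩ := Nat.exists_eq_add_of_le h
  rw [pow_add, pow_mul, hx, one_pow]

theorem mul_pow_eq_one_of_closed {G : Type*} [Group G] {p : ℕ} {H : Subgroup G}
    (hH : OmegaClosed p H) {m : ℕ} {x y : G} (hx : x ∈ H) (hy : y ∈ H)
    (hx1 : x ^ p ^ m = 1) (hy1 : y ^ p ^ m = 1) : (x * y) ^ p ^ m = 1 := by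
  have := hH m ⟨x, hx⟩ ⟨y, hy⟩ (Subtype.ext (by simpa using hx1)) (Subtype.ext (by simpa using hy1))
  simpa using congrArg Subtype.val this

theorem pow_eq_one_of_mem_omega {G : Type*} [Group G] {p : ℕ} {H : Subgroup G}
    (hH : OmegaClosed p H) {m : ℕ} {x : G} (hx : x ∈ omegaSubgroup p m H) : x ^ p ^ m = 1 := by
  have key : x ∈ H ∧ x ^ p ^ m = 1 := by
    rw [omegaSubgroup] at hx
    induction hx using Subgroup.closure_induction with
    | mem s hs => exact hs
    | one => exact ⟨one_mem H, one_pow _⟩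
    | mul a b _ _ ha hb =>
      exact ⟨mul_mem ha.1 hb.1, mul_pow_eq_one_of_closed hH ha.1 hb.1 ha.2 hb.2⟩
    | inv a _ ha => exact ⟨inv_mem ha.1, by rw [inv_pow, ha.2, inv_one]⟩
  exact key.2

/-- `[x, y]` is the product of `x y x⁻¹` and `y⁻¹` inside the powerful subgroup `⟨y⟩ G^p`; if that
is proper, the hypothesis on proper subgroups applies, and otherwise `G` is abelian. -/
theorem commutator_pow_eq_one {G : Type*} [Group G] [Finite G] {p : ℕ} (hp : p.Prime)
    (hp2 : p ≠ 2) (hG : IsPGroup p G) (hpow : commutator G ≤ subgroupPow (⊤ : Subgroup G) p)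
    (hsmall : ∀ H : Subgroup G, H ≠ ⊤ → commutator H ≤ subgroupPow (⊤ : Subgroup H) p →
      OmegaClosed p H) (x y : G) (m : ℕ) (hy : y ^ p ^ m = 1) : ⁅x, y⁆ ^ p ^ m = 1 := by
  by_cases htop : Subgroup.zpowers y ⊔ powSeries p G 1 = ⊤
  · rw [(commute_of_zpowers_sup_eq_top hp hG y htop x y).commutator_eq, one_pow]
  · have hyH : y ∈ Subgroup.zpowers y ⊔ powSeries p G 1 :=
      Subgroup.mem_sup_left (Subgroup.mem_zpowers y)
    have hc : ⁅x, y⁆ ∈ Subgroup.zpowers y ⊔ powSeries p G 1 :=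
      Subgroup.mem_sup_right (powSeries_comm_top hp hp2 hG hpow 0
        (Subgroup.commutator_mem_commutator trivial trivial))
    have hconj : x * y * x⁻¹ ∈ Subgroup.zpowers y ⊔ powSeries p G 1 := by
      have := mul_mem hc hyH
      rwa [commutatorElement_def, inv_mul_cancel_right] at this
    rw [commutatorElement_def]
    refine mul_pow_eq_one_of_closed (hsmall _ htop (powerful_zpowers_sup hp hp2 hG hpow y))
      hconj (inv_mem hyH) ?_ ?_
    · rw [conj_pow, hy]; simp
    · rw [inv_pow, hy, inv_one]

/-- One step `z ^ p ^ j ⇝ z ^ p ^ (j + 1)` of the order estimate. With `c = z ^ p ^ j`, `u = [b, c]`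
and `w = [c, u]`, the elements `u ^ p` and `w ^ p` lie in `Ω_m(G^p)` because `u ^ p ^ (m + 1) = 1`.
As `u` and `w` are high `p`-power powers, `[w, c]` and `[w, u]` are covered by the estimate `ih` for
a larger sum of exponents. -/
theorem commutator_step {G : Type u} [Group G] [Finite G] {p : ℕ} (hp : p.Prime)
    (hp2 : p ≠ 2) (hG : IsPGroup p G) (hpow : commutator G ≤ subgroupPow (⊤ : Subgroup G) p)
    (hcl : OmegaClosed p (powSeries p G 1))
    (hcomm : ∀ (x y : G) (m : ℕ), y ^ p ^ m = 1 → ⁅x, y⁆ ^ p ^ m = 1)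
    (m j k : ℕ)
    (ih : ∀ m' j' k' : ℕ, m + (j + 1) + k < m' + j' + k' → ∀ x y : G,
      x ^ p ^ (m' + j' + k' + 1) = 1 → y ^ p ^ (m' + j' + k') = 1 →
        ⁅x ^ p ^ j', y ^ p ^ k'⁆ ^ p ^ m' = 1)
    (z b : G) (hz : z ^ p ^ (m + (j + 1) + k + 1) = 1) (hb : b ∈ powSeries p G k)
    (hu : ⁅b, z ^ p ^ j⁆ ^ p ^ (m + 1) = 1) : ⁅b, z ^ p ^ (j + 1)⁆ ^ p ^ m = 1 := by
  have hO := omegaSubgroup_normal p m (powSeries p G 1)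
  have hzj : z ^ p ^ j ∈ powSeries p G j := by
    simpa using pow_mem_powSeries (p := p) (x := z) (j := 0) trivial j
  have hpos : ∀ {n : ℕ} {a : G}, a ∈ powSeries p G (n + 1) → a ∈ powSeries p G 1 := fun {n _} h =>
    powSeries_antitone p G (by omega : 1 ≤ n + 1) h
  have huP : ⁅b, z ^ p ^ j⁆ ∈ powSeries p G (0 + (k + j + 1)) := by
    rw [zero_add]
    exact powSeries_comm hp hp2 hG hpow k j (Subgroup.commutator_mem_commutator hb hzj)
  have hwP : ⁅z ^ p ^ j, ⁅b, z ^ p ^ j⁆⁆ ∈ powSeries p G (0 + (j + (k + j + 1) + 1)) := by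
    rw [zero_add]
    rw [zero_add] at huP
    exact powSeries_comm hp hp2 hG hpow j _ (Subgroup.commutator_mem_commutator hzj huP)
  have hw := hcomm (z ^ p ^ j) _ (m + 1) hu
  obtain ⟨μ, -, hμ⟩ := exists_pow_eq_of_mem_powSeries hp hp2 hG hpow 0 _ _ huP
  obtain ⟨ω, -, hω⟩ := exists_pow_eq_of_mem_powSeries hp hp2 hG hpow 0 _ _ hwP
  have hmem : ⁅b, (z ^ p ^ j) ^ p⁆ ∈ omegaSubgroup p m (powSeries p G 1) := by
    rw [zero_add] at hwP huP
    have hμ1 : μ ^ p ^ ((k + j + 1) + (m + 1)) = 1 := by rw [pow_add, pow_mul, hμ, hu]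
    have hω1 : ω ^ p ^ ((j + (k + j + 1) + 1) + (m + 1)) = 1 := by rw [pow_add, pow_mul, hω, hw]
    have hcP : ∀ a c : G, ⁅a, c⁆ ∈ powSeries p G 1 := fun a c =>
      powSeries_comm_top hp hp2 hG hpow 0 (Subgroup.commutator_mem_commutator trivial trivial)
    refine comm_pow_mem hp hp2 _ b (z ^ p ^ j) ?_ ?_ ?_ ?_
    · refine Subgroup.subset_closure ⟨hcP _ _, ?_⟩
      rw [← hω]
      exact ih m _ j (by omega) ω z (pow_eq_one_of_le hω1 (by omega))
        (pow_eq_one_of_le hz (by omega))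
    · refine Subgroup.subset_closure ⟨hcP _ _, ?_⟩
      rw [← hω, ← hμ]
      exact ih m _ _ (by omega) ω μ (pow_eq_one_of_le hω1 (by omega))
        (pow_eq_one_of_le hμ1 (by omega))
    · exact Subgroup.subset_closure ⟨pow_mem (hpos hwP) p, by
        rw [← pow_mul, ← pow_succ', hw]⟩
    · exact Subgroup.subset_closure ⟨pow_mem (hpos huP) p, by
        rw [← pow_mul, ← pow_succ', hu]⟩
  rw [pow_succ, pow_mul]
  exact pow_eq_one_of_mem_omega hcl hmem

/-- The order estimate for commutators of powers, given the case `j = k = 0` and that `Ω_m(G^p)`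
has exponent dividing `p ^ m`. -/
theorem commutator_pow_pow {G : Type u} [Group G] [Finite G] {p : ℕ} (hp : p.Prime)
    (hp2 : p ≠ 2) (hG : IsPGroup p G) (hpow : commutator G ≤ subgroupPow (⊤ : Subgroup G) p)
    (hcl : OmegaClosed p (powSeries p G 1))
    (hcomm : ∀ (x y : G) (m : ℕ), y ^ p ^ m = 1 → ⁅x, y⁆ ^ p ^ m = 1)
    (m j k : ℕ) (x y : G) (hx : x ^ p ^ (m + j + k + 1) = 1) (hy : y ^ p ^ (m + j + k) = 1) :
    ⁅x ^ p ^ j, y ^ p ^ k⁆ ^ p ^ m = 1 := by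
  have := Fact.mk hp
  obtain ⟨e, he⟩ := IsPGroup.iff_card.1 hG
  have hexp : ∀ g : G, g ^ p ^ e = 1 := fun g => by rw [← he]; exact pow_card_eq_one'
  have hmemP : ∀ (g : G) (n : ℕ), g ^ p ^ n ∈ powSeries p G n := fun g n => by
    simpa using pow_mem_powSeries (p := p) (x := g) (j := 0) trivial n
  -- descending induction on `m + j + k`, starting where it reaches the exponent `e` of `|G|`
  obtain ⟨d, hd⟩ : ∃ d, e ≤ m + j + k + d := ⟨e, by omega⟩
  induction d generalizing m j k x y with
  | zero =>
    have hc : ⁅x ^ p ^ j, y ^ p ^ k⁆ ∈ powSeries p G (0 + (j + k + 1)) := by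
      rw [zero_add]
      exact powSeries_comm hp hp2 hG hpow j k
        (Subgroup.commutator_mem_commutator (hmemP x j) (hmemP y k))
    obtain ⟨g, -, hg⟩ := exists_pow_eq_of_mem_powSeries hp hp2 hG hpow 0 _ _ hc
    rw [← hg, ← pow_mul, ← pow_add]
    exact pow_eq_one_of_le (hexp g) (by omega)
  | succ d ihd =>
    have ih : ∀ m' j' k' : ℕ, m + j + k < m' + j' + k' → ∀ x y : G,
        x ^ p ^ (m' + j' + k' + 1) = 1 → y ^ p ^ (m' + j' + k') = 1 →
          ⁅x ^ p ^ j', y ^ p ^ k'⁆ ^ p ^ m' = 1 := fun m' j' k' h x y hx hy =>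
      ihd m' j' k' x y hx hy (by omega)
    clear ihd hd
    induction j generalizing m with
    | zero =>
      induction k generalizing m with
      | zero => simpa using hcomm x y m hy
      | succ k ihk =>
        have hprev := ihk (m + 1)
          (by rwa [show m + 1 + 0 + k + 1 = m + 0 + (k + 1) + 1 by omega])
          (by rwa [show m + 1 + 0 + k = m + 0 + (k + 1) by omega])
          (fun m' j' k' h => ih m' j' k' (by omega))
        exact commutator_step hp hp2 hG hpow hcl hcomm m k 0
          (fun m' j' k' h => ih m' j' k' (by omega)) y (x ^ p ^ 0)
          (pow_eq_one_of_le hy (by omega)) trivial hprev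
    | succ j ihj =>
      have hprev := ihj (m + 1)
        (by rwa [show m + 1 + j + k + 1 = m + (j + 1) + k + 1 by omega])
        (by rwa [show m + 1 + j + k = m + (j + 1) + k by omega])
        (fun m' j' k' h => ih m' j' k' (by omega))
      rw [← commutatorElement_inv, inv_pow, inv_eq_one] at hprev ⊢
      exact commutator_step hp hp2 hG hpow hcl hcomm m j k ih x _ hx (hmemP y k) hprev

/-- `G^p` is a proper powerful subgroup unless `G` is trivial. -/
theorem omegaClosed_aux {G : Type u} [Group G] [Finite G] {p : ℕ} (hp : p.Prime)
    (hp2 : p ≠ 2) (hG : IsPGroup p G) (hpow : commutator G ≤ subgroupPow (⊤ : Subgroup G) p)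
    (hsmall : ∀ H : Subgroup G, H ≠ ⊤ → commutator H ≤ subgroupPow (⊤ : Subgroup H) p →
      OmegaClosed p H) :
    OmegaClosed p (powSeries p G 1) := by
  by_cases htop : powSeries p G 1 = ⊤
  · have hbot : (⊥ : Subgroup G) = ⊤ :=
      eq_top_of_sup_pow hp hG ⊥ (by rw [bot_sup_eq]; exact htop)
    intro m x y _ _
    have hmem : ((x * y : powSeries p G 1) : G) ∈ (⊥ : Subgroup G) := hbot ▸ Subgroup.mem_top _
    have : x * y = 1 := Subtype.ext (Subgroup.mem_bot.1 hmem)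
    rw [this, one_pow]
  · exact hsmall _ htop (powerful_powSeries hp hp2 hG hpow 1)

/-- Wilson's theorem: in a powerful `p`-group with `p` odd, `Ω_m(G)` has exponent dividing
`p ^ m`. -/
theorem omegaClosed_of_powerful {p : ℕ} (hp : p.Prime) (hp2 : p ≠ 2) (n : ℕ) :
    ∀ (G : Type u) [Group G] [Finite G], Nat.card G = n → IsPGroup p G →
      commutator G ≤ subgroupPow (⊤ : Subgroup G) p → OmegaClosed p G := by
  induction n using Nat.strong_induction_on with
  | _ n ih =>
  intro G _ _ hn hG hpow
  have hsmall : ∀ H : Subgroup G, H ≠ ⊤ → commutator H ≤ subgroupPow (⊤ : Subgroup H) p →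
      OmegaClosed p H := fun H hH hHp =>
    ih _ (hn ▸ card_lt_of_ne_top hH) H rfl (hG.to_subgroup H) hHp
  have hcl := omegaClosed_aux hp hp2 hG hpow hsmall
  have hcomm := commutator_pow_eq_one hp hp2 hG hpow hsmall
  intro m x y hx hy
  cases m with
  | zero =>
    rw [pow_zero, pow_one] at hx hy
    simp [hx, hy]
  | succ m =>
    have hO := omegaSubgroup_normal p m (powSeries p G 1)
    have hcP : ∀ a c : G, ⁅a, c⁆ ∈ powSeries p G 1 := fun a c =>
      powSeries_comm_top hp hp2 hG hpow 0 (Subgroup.commutator_mem_commutator trivial trivial)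
    have hpowO : ∀ a : G, a ^ p ^ (m + 1) = 1 → a ^ p ∈ omegaSubgroup p m (powSeries p G 1) :=
      fun a ha => Subgroup.subset_closure
        ⟨pow_mem_subgroupPow (N := ⊤) trivial p, by rw [← pow_mul, ← pow_succ', ha]⟩
    have hw := hcomm y x (m + 1) hx
    obtain ⟨ω, -, hω⟩ := exists_pow_eq_of_mem_powSeries hp hp2 hG hpow 0 1 _ (hcP y x)
    have hwO : ∀ a : G, a ^ p ^ (m + 1) = 1 →
        ⁅⁅y, x⁆, a⁆ ∈ omegaSubgroup p m (powSeries p G 1) := by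
      intro a ha
      refine Subgroup.subset_closure ⟨hcP _ _, ?_⟩
      have := commutator_pow_pow hp hp2 hG hpow hcl hcomm m 1 0 ω a
        (by rw [show m + 1 + 0 + 1 = 1 + (m + 1) by omega, pow_add, pow_mul, hω, hw]) ha
      rwa [hω, pow_zero, pow_one] at this
    have hxy := mul_pow_mod hp hp2 (omegaSubgroup p m (powSeries p G 1)) x y (hwO y hy) (hwO x hx)
      (hpowO _ hw)
    have hmem : (x * y) ^ p ∈ omegaSubgroup p m (powSeries p G 1) := by
      rw [← QuotientGroup.eq_one_iff, hxy, QuotientGroup.eq_one_iff]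
      exact mul_mem (hpowO x hx) (hpowO y hy)
    rw [pow_succ', pow_mul]
    exact pow_eq_one_of_mem_omega hcl hmem

theorem omega_statement_5 (p : ℕ) (hp : p.Prime) (hp2 : p ≠ 2) (G : Type*) [Group G]
    [Finite G] (hG : IsPGroup p G) (hpow : IsPowerful p G) (i : ℕ) (hi : 1 ≤ i) :
    ⁅omegaSubgroup p i (subgroupPow (⊤ : Subgroup G) (p ^ 2)),
        omegaSubgroup p i (subgroupPow (⊤ : Subgroup G) p)⁆ ≤
      subgroupPow (omegaSubgroup p i (subgroupPow (⊤ : Subgroup G) p)) (p ^ 2) := by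
  rw [IsPowerful, if_neg hp2] at hpow
  have hsmall : ∀ H : Subgroup G, H ≠ ⊤ → commutator H ≤ subgroupPow (⊤ : Subgroup H) p →
      OmegaClosed p H := fun H _ hHp =>
    omegaClosed_of_powerful hp hp2 _ H rfl (hG.to_subgroup H) hHp
  have hcl := omegaClosed_aux hp hp2 hG hpow hsmall
  have hcomm := commutator_pow_eq_one hp hp2 hG hpow hsmall
  have hO := omegaSubgroup_normal p i (subgroupPow (⊤ : Subgroup G) p)
  have hN := subgroupPow_normal (omegaSubgroup p i (subgroupPow (⊤ : Subgroup G) p)) (p ^ 2)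
  have hle : subgroupPow (⊤ : Subgroup G) (p ^ 2) ≤ powSeries p G (0 + 2) := by
    refine (Subgroup.closure_le _).2 ?_
    rintro _ ⟨x, -, rfl⟩
    exact pow_mem_powSeries (j := 0) trivial 2
  refine commutator_closure_le ?_
  rintro a ⟨ha, ha1⟩ b ⟨hb, hb1⟩
  obtain ⟨c, -, hc⟩ := exists_pow_eq_of_mem_powSeries hp hp2 hG hpow 0 2 a (hle ha)
  obtain ⟨d, -, hd⟩ := exists_pow_eq_of_mem_powSeries hp hp2 hG hpow 0 1 b hb
  have hab : ⁅a, b⁆ ^ p ^ (i - 2) = 1 := by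
    have hc1 : c ^ p ^ (2 + i) = 1 := by rw [pow_add, pow_mul, hc, ha1]
    have hd1 : d ^ p ^ (1 + i) = 1 := by rw [pow_add, pow_mul, hd, hb1]
    rw [← hc, ← hd]
    exact commutator_pow_pow hp hp2 hG hpow hcl hcomm (i - 2) 2 1 c d
      (pow_eq_one_of_le hc1 (by omega)) (pow_eq_one_of_le hd1 (by omega))
  -- for `i = 1` the truncated `i - 2 = 0` makes `hab` say `⁅a, b⁆ = 1`
  obtain hi2 | hi2 := Nat.lt_or_ge i 2
  · rw [Nat.sub_eq_zero_of_le hi2.le, pow_zero, pow_one] at hab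
    rw [hab]
    exact one_mem _
  · have habP : ⁅a, b⁆ ∈ powSeries p G (1 + 2) :=
      powSeries_antitone p G (by omega : 3 ≤ 2 + 1 + 1)
        (powSeries_comm hp hp2 hG hpow 2 1 (Subgroup.commutator_mem_commutator (hle ha) hb))
    obtain ⟨g, hg, hgab⟩ := exists_pow_eq_of_mem_powSeries hp hp2 hG hpow 1 2 _ habP
    rw [← hgab]
    have hg1 : g ^ p ^ i = 1 := by
      have h : g ^ p ^ (2 + (i - 2)) = 1 := by rw [pow_add, pow_mul, hgab, hab]
      rwa [Nat.add_sub_cancel' hi2] at h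
    have hgO : g ∈ omegaSubgroup p i (subgroupPow (⊤ : Subgroup G) p) :=
      Subgroup.subset_closure ⟨hg, hg1⟩
    exact pow_mem_subgroupPow hgO _
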